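/- (Gibbs–Gaussian integration by parts.) Let Σ be an at most countable set, let (x(σ))_{σ∈Σ} and (y(σ))_{σ∈Σ} be jointly Gaussian centered processes with uniformly bounded variances, let C(σ¹, σ²) = E[x(σ¹) y(σ²)], let G' be a finite measure on Σ, let Z = Σ_σ e^{y(σ)} G'(σ), and let G(σ) = e^{y(σ)} G'(σ)/Z. Then E⟨x(σ)⟩_G = E⟨C(σ¹,σ¹) − C(σ¹,σ²)⟩_{G^{⊗2}}, and for any bounded measurable f on Σⁿ: E⟨f(σ¹,…,σⁿ) x(σ¹)⟩_{G^{⊗n}} = E⟨f(σ¹,…,σⁿ) ( Σ_{k=1}^{n} C(σ¹,σᵏ) − n C(σ¹,σ^{n+1}) )⟩_{G^{⊗(n+1)}}. -/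

import Mathlib

open MeasureTheory ProbabilityTheory Filter Real
open scoped ENNReal NNReal Classical BigOperators Topology

noncomputable section

/-- The Gibbs weight on a countable set: `G(σ) = e^{y(σ)} G'(σ) / Z` with
`Z = ∑_σ e^{y(σ)} G'(σ)`, for a finite measure with weights `w = G'`. -/
def gibbsW {Ω S : Type} (y : S → Ω → ℝ) (w : S → ℝ) (σ : S) (ω : Ω) : ℝ :=
  Real.exp (y σ ω) * w σ / ∑' τ : S, Real.exp (y τ ω) * w τ

/-- The mutual covariance `C(σ¹,σ²) = E[x(σ¹) y(σ²)]` of two centered processes. -/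
def cov {Ω S : Type} [MeasurableSpace Ω] (P : Measure Ω) (x y : S → Ω → ℝ)
    (σ₁ σ₂ : S) : ℝ :=
  ∫ ω, x σ₁ ω * y σ₂ ω ∂P


/-- Deterministic Gibbs weight. -/
def gw {S : Type} (w y : S → ℝ) (σ : S) : ℝ :=
  Real.exp (y σ) * w σ / ∑' τ : S, Real.exp (y τ) * w τ

section det
variable {S : Type}

lemma gw_nonneg {w : S → ℝ} (hw : ∀ σ, 0 ≤ w σ) (y : S → ℝ) (σ : S) : 0 ≤ gw w y σ := by
  unfold gw
  exact div_nonneg (mul_nonneg (exp_pos _).le (hw _))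
    (tsum_nonneg fun τ => mul_nonneg (exp_pos _).le (hw _))

lemma gw_dich (w y : S → ℝ) : (∀ σ, gw w y σ = 0) ∨ HasSum (gw w y) 1 := by
  by_cases hs : Summable fun τ => Real.exp (y τ) * w τ
  · by_cases hz : ∑' τ : S, Real.exp (y τ) * w τ = 0
    · left; intro σ; simp [gw, hz]
    · right
      have := hs.hasSum.div_const (∑' τ : S, Real.exp (y τ) * w τ)
      rw [div_self hz] at this
      exact this
  · left; intro σ; simp [gw, tsum_eq_zero_of_not_summable hs]

lemma gw_summable (w y : S → ℝ) : Summable (gw w y) := by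
  rcases gw_dich w y with h | h
  · rw [show gw w y = fun _ => 0 from funext h]; exact summable_zero
  · exact h.summable

lemma gw_tsum_le (w y : S → ℝ) : ∑' τ, gw w y τ ≤ 1 := by
  rcases gw_dich w y with h | h
  · simp [h]
  · exact h.tsum_eq.le

lemma gw_le_one {w : S → ℝ} (hw : ∀ σ, 0 ≤ w σ) (y : S → ℝ) (σ : S) : gw w y σ ≤ 1 := by
  exact ((gw_summable w y).le_tsum σ fun τ _ => gw_nonneg hw y τ).trans (gw_tsum_le w y)

lemma gw_mul_tsum (w y : S → ℝ) (σ : S) : gw w y σ * ∑' τ, gw w y τ = gw w y σ := by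
  rcases gw_dich w y with h | h
  · simp [h]
  · rw [h.tsum_eq, mul_one]

lemma measurable_gw [Countable S] (w : S → ℝ) (σ : S) : Measurable fun y : S → ℝ => gw w y σ := by
  unfold gw
  refine Measurable.div (by fun_prop) (Measurable.tsum fun τ => by fun_prop)

lemma cgw_summable {w : S → ℝ} (hw : ∀ σ, 0 ≤ w σ) (y a : S → ℝ) {A : ℝ} (ha : ∀ τ, |a τ| ≤ A) :
    Summable fun τ => a τ * gw w y τ := by
  refine Summable.of_norm_bounded ((gw_summable w y).mul_left A) fun τ => ?_
  rw [norm_mul, Real.norm_eq_abs, Real.norm_of_nonneg (gw_nonneg hw y τ)]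
  exact mul_le_mul_of_nonneg_right (ha τ) (gw_nonneg hw y τ)

lemma cgw_abs_le {w : S → ℝ} (hw : ∀ σ, 0 ≤ w σ) (y a : S → ℝ) {A : ℝ} (hA : 0 ≤ A)
    (ha : ∀ τ, |a τ| ≤ A) : |∑' τ, a τ * gw w y τ| ≤ A := by
  have h1 : ‖∑' τ, a τ * gw w y τ‖ ≤ ∑' τ, A * gw w y τ := by
    refine tsum_of_norm_bounded ((gw_summable w y).mul_left A).hasSum fun τ => ?_
    rw [norm_mul, Real.norm_eq_abs, Real.norm_of_nonneg (gw_nonneg hw y τ)]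
    exact mul_le_mul_of_nonneg_right (ha τ) (gw_nonneg hw y τ)
  rw [tsum_mul_left] at h1
  exact h1.trans (mul_le_of_le_one_right hA (gw_tsum_le w y))

lemma summ_shift {w : S → ℝ} (hw : ∀ σ, 0 ≤ w σ) {r b : S → ℝ} {B : ℝ} (hb : ∀ τ, b τ ≤ B)
    (h : Summable fun τ => Real.exp (r τ) * w τ) :
    Summable fun τ => Real.exp (b τ + r τ) * w τ := by
  refine Summable.of_nonneg_of_le (fun τ => mul_nonneg (exp_pos _).le (hw _)) (fun τ => ?_)
    (h.mul_left (Real.exp B))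
  rw [Real.exp_add, mul_assoc]
  exact mul_le_mul_of_nonneg_right (Real.exp_le_exp.2 (hb τ)) (mul_nonneg (exp_pos _).le (hw _))

lemma at_le {a A t : ℝ} (ha : |a| ≤ A) : a * t ≤ A * |t| := by
  calc a * t ≤ |a * t| := le_abs_self _
    _ = |a| * |t| := abs_mul _ _
    _ ≤ A * |t| := mul_le_mul_of_nonneg_right ha (abs_nonneg _)

lemma gw_hasDerivAt {w : S → ℝ} (hw : ∀ σ, 0 ≤ w σ) (r a : S → ℝ) {A : ℝ}
    (ha : ∀ τ, |a τ| ≤ A) (σ : S) (t : ℝ) :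
    HasDerivAt (fun t => gw w (fun τ => a τ * t + r τ) σ)
      (gw w (fun τ => a τ * t + r τ) σ *
        (a σ - ∑' τ, a τ * gw w (fun τ => a τ * t + r τ) τ)) t := by
  by_cases hs : Summable fun τ => Real.exp (r τ) * w τ
  swap
  · have hz : ∀ t : ℝ, ∀ σ, gw w (fun τ => a τ * t + r τ) σ = 0 := by
      intro t σ
      have : ¬ Summable fun τ => Real.exp (a τ * t + r τ) * w τ := by
        intro h
        apply hs
        have := summ_shift (b := fun τ => a τ * (-t)) hw (fun τ => at_le (ha τ)) h
        refine this.congr fun τ => ?_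
        congr 2; ring
      simp [gw, tsum_eq_zero_of_not_summable this]
    simp only [hz]
    simpa using hasDerivAt_const t (0 : ℝ)
  by_cases hw0 : ∃ τ, w τ ≠ 0
  swap
  · push Not at hw0
    have hz : ∀ t : ℝ, ∀ σ, gw w (fun τ => a τ * t + r τ) σ = 0 := by
      intro t σ
      simp [gw, hw0]
    simp only [hz]
    simpa using hasDerivAt_const t (0 : ℝ)
  obtain ⟨τ0, hτ0⟩ := hw0
  have hτ0 : 0 < w τ0 := lt_of_le_of_ne (hw τ0) (Ne.symm hτ0)
  have hst : ∀ t : ℝ, Summable fun τ => Real.exp (a τ * t + r τ) * w τ := fun t =>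
    summ_shift (b := fun τ => a τ * t) hw (fun τ => at_le (ha τ)) hs
  have hZpos : 0 < ∑' τ, Real.exp (a τ * t + r τ) * w τ :=
    (hst t).tsum_pos (fun τ => mul_nonneg (exp_pos _).le (hw _)) τ0 (mul_pos (exp_pos _) hτ0)
  have he : ∀ τ t, HasDerivAt (fun t => Real.exp (a τ * t + r τ) * w τ)
      (a τ * (Real.exp (a τ * t + r τ) * w τ)) t := by
    intro τ t
    have h1 : HasDerivAt (fun t => a τ * t + r τ) (a τ) t := by
      simpa using ((hasDerivAt_id t).const_mul (a τ)).add_const (r τ)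
    refine ((h1.exp).mul_const (w τ)).congr_deriv ?_
    ring
  have hA : 0 ≤ A := (abs_nonneg _).trans (ha τ0)
  have hZ : HasDerivAt (fun t => ∑' τ, Real.exp (a τ * t + r τ) * w τ)
      (∑' τ, a τ * (Real.exp (a τ * t + r τ) * w τ)) t := by
    refine hasDerivAt_tsum_of_isPreconnected (t := Metric.ball (0 : ℝ) (|t| + 1)) (y₀ := 0)
      (u := fun τ => A * (Real.exp (A * (|t| + 1)) * (Real.exp (r τ) * w τ)))
      ((hs.mul_left _).mul_left _) Metric.isOpen_ball (convex_ball _ _).isPreconnected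
      (fun τ s _ => he τ s) ?_ ?_ ?_ ?_
    · intro τ s hs'
      rw [norm_mul, Real.norm_eq_abs, Real.norm_of_nonneg (mul_nonneg (exp_pos _).le (hw _))]
      refine mul_le_mul (ha τ) ?_ (mul_nonneg (exp_pos _).le (hw _)) hA
      rw [Real.exp_add, mul_assoc]
      refine mul_le_mul_of_nonneg_right (Real.exp_le_exp.2 ((at_le (ha τ)).trans ?_))
        (mul_nonneg (exp_pos _).le (hw _))
      refine mul_le_mul_of_nonneg_left ?_ hA
      simpa using (mem_ball_zero_iff.1 hs').le
    · simp; positivity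
    · simpa using hs
    · simp
  have := (he σ t).div hZ hZpos.ne'
  refine this.congr_deriv ?_
  simp only [gw]
  have h2 : ∑' τ, a τ * (Real.exp (a τ * t + r τ) * w τ / ∑' τ, Real.exp (a τ * t + r τ) * w τ)
      = (∑' τ, a τ * (Real.exp (a τ * t + r τ) * w τ)) / ∑' τ, Real.exp (a τ * t + r τ) * w τ := by
    rw [← tsum_div_const]
    exact tsum_congr fun τ => by ring
  rw [h2]
  generalize (∑' τ, Real.exp (a τ * t + r τ) * w τ) = Z at *
  generalize (∑' τ, a τ * (Real.exp (a τ * t + r τ) * w τ)) = Z' at *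
  have hZ0 := hZpos.ne'
  field_simp

lemma prod_hasDerivAt {n : ℕ} (g h : Fin n → ℝ → ℝ) (t : ℝ)
    (hg : ∀ i, HasDerivAt (g i) (g i t * h i t) t) :
    HasDerivAt (fun t => ∏ i, g i t) ((∏ i, g i t) * ∑ i, h i t) t := by
  have := HasDerivAt.fun_finsetProd (u := Finset.univ) (fun i _ => hg i)
  refine this.congr_deriv ?_
  rw [Finset.mul_sum]
  refine Finset.sum_congr rfl fun i hi => ?_
  rw [← Finset.mul_prod_erase _ _ hi, smul_eq_mul]
  ring

lemma stein {v : ℝ≥0} (hv : v ≠ 0) (F F' : ℝ → ℝ) (hF : ∀ t, HasDerivAt F (F' t) t) {K K' : ℝ}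
    (hK : ∀ t, |F t| ≤ K) (hK' : ∀ t, |F' t| ≤ K') :
    ∫ t, t * F t ∂(gaussianReal 0 v) = v * ∫ t, F' t ∂(gaussianReal 0 v) := by
  have hFc : Continuous F := continuous_iff_continuousAt.2 fun t => (hF t).continuousAt
  have hF'm : Measurable F' := by
    rw [show F' = deriv F from funext fun t => (hF t).deriv.symm]; exact measurable_deriv F
  have hv' : (v : ℝ) ≠ 0 := by exact_mod_cast hv
  have hint : ∀ f : ℝ → ℝ, Integrable f (gaussianReal 0 v) →
      Integrable (fun t => f t * gaussianPDFReal 0 v t) := by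
    intro f hf
    rw [gaussianReal_of_var_ne_zero _ hv,
      integrable_withDensity_iff_integrable_smul' (measurable_gaussianPDF _ _)
        (ae_of_all _ fun _ ↦ gaussianPDF_lt_top)] at hf
    refine hf.congr (ae_of_all _ fun t => ?_)
    simp [mul_comm]
  have hpdf : ∀ t, HasDerivAt (gaussianPDFReal 0 v) (-(t / v) * gaussianPDFReal 0 v t) t := by
    intro t
    rw [gaussianPDFReal_def]
    have h1 : HasDerivAt (fun x : ℝ => -(x - 0) ^ 2 / (2 * (v : ℝ))) (-(t / v)) t := by
      have := ((((hasDerivAt_id t).sub_const 0).pow 2).neg).div_const (2 * (v : ℝ))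
      refine this.congr_deriv ?_
      simp; field_simp
    refine ((h1.exp).const_mul (√(2 * π * v))⁻¹).congr_deriv ?_
    ring
  have i1 : Integrable F (gaussianReal 0 v) :=
    Integrable.of_bound hFc.measurable.aestronglyMeasurable K (ae_of_all _ hK)
  have i2 : Integrable F' (gaussianReal 0 v) :=
    Integrable.of_bound hF'm.aestronglyMeasurable K' (ae_of_all _ hK')
  have i0 : Integrable (fun t : ℝ => t) (gaussianReal 0 v) :=
    (memLp_id_gaussianReal (μ := 0) (v := v) 1).integrable (by simp)
  have i3 : Integrable (fun t => t * F t) (gaussianReal 0 v) :=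
    i0.mul_bdd hFc.measurable.aestronglyMeasurable (ae_of_all _ hK)
  have key := integral_mul_deriv_eq_deriv_mul_of_integrable (u := F) (u' := F')
    (v := gaussianPDFReal 0 v) (v' := fun t => -(t / v) * gaussianPDFReal 0 v t)
    (fun t _ => hF t) (fun t _ => hpdf t)
    (((hint _ i3).const_mul (-(1 / (v : ℝ)))).congr (ae_of_all _ fun t => by
      simp only [Pi.mul_apply]; ring)) (hint _ i2) (hint _ i1)
  rw [integral_gaussianReal_eq_integral_smul hv, integral_gaussianReal_eq_integral_smul hv]
  simp only [smul_eq_mul]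
  have e1 : ∫ t, gaussianPDFReal 0 v t * (t * F t)
      = -(v : ℝ) * ∫ t, F t * (-(t / v) * gaussianPDFReal 0 v t) := by
    rw [← integral_const_mul]
    refine integral_congr_ae (ae_of_all _ fun t => ?_)
    simp only
    field_simp
  rw [e1, key]
  simp only [mul_comm (F' _)]
  ring

lemma core1d {w : S → ℝ} (hw : ∀ σ, 0 ≤ w σ) (r a : S → ℝ) {A : ℝ} (hA : 0 ≤ A)
    (ha : ∀ τ, |a τ| ≤ A) {v : ℝ≥0} (hv : v ≠ 0) {n : ℕ} (σs : Fin n → S) :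
    ∫ t, t * ∏ i, gw w (fun τ => a τ * t + r τ) (σs i) ∂(gaussianReal 0 v) =
    v * ∫ t, (∏ i, gw w (fun τ => a τ * t + r τ) (σs i)) *
      ∑ i, (a (σs i) - ∑' τ, a τ * gw w (fun τ => a τ * t + r τ) τ) ∂(gaussianReal 0 v) := by
  have hp : ∀ t : ℝ, |∏ i, gw w (fun τ => a τ * t + r τ) (σs i)| ≤ 1 := by
    intro t
    rw [abs_of_nonneg (Finset.prod_nonneg fun i _ => gw_nonneg hw _ _)]
    exact Finset.prod_le_one (fun i _ => gw_nonneg hw _ _) fun i _ => gw_le_one hw _ _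
  refine stein hv _ _ (fun t => prod_hasDerivAt (fun i t => gw w (fun τ => a τ * t + r τ) (σs i))
    (fun i t => a (σs i) - ∑' τ, a τ * gw w (fun τ => a τ * t + r τ) τ) t
    fun i => gw_hasDerivAt hw r a ha _ t) (K := 1) (K' := n * (A + A)) hp ?_
  intro t
  rw [abs_mul]
  refine (mul_le_of_le_one_left (abs_nonneg _) (hp t)).trans ?_
  refine (Finset.abs_sum_le_sum_abs _ _).trans ?_
  refine (Finset.sum_le_sum (g := fun _ => A + A) fun i _ => ?_).trans (by simp; linarith)
  exact (abs_sub _ _).trans (add_le_add (ha _) (cgw_abs_le hw _ _ hA ha))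

end det

section gauss
variable {Ω S : Type} [MeasurableSpace Ω] {P : Measure Ω} [IsProbabilityMeasure P]

lemma gp_of {x y : S → Ω → ℝ} (hx : ∀ σ, Measurable (x σ)) (hy : ∀ σ, Measurable (y σ))
    (hgauss : ∀ (s : Finset (S ⊕ S)) (c : S ⊕ S → ℝ), ∃ var : ℝ≥0,
      P.map (fun ω => ∑ i ∈ s, c i * Sum.elim x y i ω) = gaussianReal 0 var) :
    IsGaussianProcess (Sum.elim x y) P := by
  have hm : ∀ i, Measurable (Sum.elim x y i) := by rintro (i | i) <;> simp [hx, hy]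
  refine ⟨fun I => ⟨isGaussian_of_map_eq_gaussianReal fun L => ?_⟩⟩
  have hmr : Measurable fun ω => I.restrict (fun i => Sum.elim x y i ω) :=
    measurable_pi_lambda _ fun i => hm i
  obtain ⟨v, hv⟩ := hgauss I (fun i => if h : i ∈ I then L (Pi.single ⟨i, h⟩ 1) else 0)
  refine ⟨0, v, ?_⟩
  rw [← hv, Measure.map_map (by fun_prop) hmr]
  congr 1
  funext ω
  rw [← Finset.sum_attach]
  simp only [Function.comp_apply, Finset.coe_mem, dif_pos]
  conv_lhs => rw [pi_eq_sum_univ' (I.restrict fun i => Sum.elim x y i ω)]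
  rw [map_sum]
  refine Finset.sum_congr rfl fun i _ => ?_
  rw [map_smul, smul_eq_mul, mul_comm]
  rfl

lemma g_memLp {U : Ω → ℝ} (hU : Measurable U) {v : ℝ≥0}
    (h : P.map U = gaussianReal 0 v) : MemLp U 2 P := by
  have := memLp_id_gaussianReal (μ := 0) (v := v) 2
  rw [← h] at this
  exact (memLp_map_measure_iff (by fun_prop) hU.aemeasurable).1 this

lemma g_mean {U : Ω → ℝ} (hU : Measurable U) {v : ℝ≥0}
    (h : P.map U = gaussianReal 0 v) : ∫ ω, U ω ∂P = 0 := by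
  have : ∫ t, t ∂(P.map U) = 0 := by rw [h]; exact integral_id_gaussianReal
  rwa [integral_map hU.aemeasurable (by fun_prop)] at this

lemma g_sq {U : Ω → ℝ} (hU : Measurable U) {v : ℝ≥0}
    (h : P.map U = gaussianReal 0 v) : ∫ ω, (U ω) ^ 2 ∂P = v := by
  have h1 : Var[U; P] = v := by
    rw [← variance_id_map hU.aemeasurable, h, variance_id_gaussianReal]
  rw [variance_of_integral_eq_zero hU.aemeasurable (g_mean hU h)] at h1
  exact h1

lemma g_exp_int {U : Ω → ℝ} (hU : Measurable U) {v : ℝ≥0}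
    (h : P.map U = gaussianReal 0 v) (t : ℝ) : Integrable (fun ω => Real.exp (t * U ω)) P := by
  have := integrable_exp_mul_gaussianReal (μ := 0) (v := v) t
  rw [← h] at this
  exact this.comp_measurable hU

lemma g_exp {U : Ω → ℝ} {v : ℝ≥0}
    (h : P.map U = gaussianReal 0 v) (t : ℝ) : ∫ ω, Real.exp (t * U ω) ∂P = Real.exp (v * t ^ 2 / 2) := by
  have := mgf_gaussianReal h t
  rw [mgf] at this
  rw [this]; simp

lemma core2 [Countable S] {X : Ω → ℝ} {y : S → Ω → ℝ} (hX : Measurable X)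
    (hy : ∀ σ, Measurable (y σ))
    {T : Type} {Y : T → Ω → ℝ} (hG : IsGaussianProcess Y P) (i0 : T) (j : S → T)
    (hi0 : Y i0 = X) (hj : ∀ τ, Y (j τ) = y τ)
    {v : ℝ≥0} (hXv : P.map X = gaussianReal 0 v) (hyL : ∀ τ, MemLp (y τ) 2 P)
    {M : ℝ} (hM : 0 ≤ M) (hc : ∀ τ, |∫ ω, X ω * y τ ω ∂P| ≤ M)
    {w : S → ℝ} (hw : ∀ σ, 0 ≤ w σ) {n : ℕ} (σs : Fin n → S) :
    ∫ ω, X ω * ∏ i, gw w (fun τ => y τ ω) (σs i) ∂P =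
    ∫ ω, (∏ i, gw w (fun τ => y τ ω) (σs i)) *
      ∑ i, ((∫ ω, X ω * y (σs i) ω ∂P) -
        ∑' τ, (∫ ω, X ω * y τ ω ∂P) * gw w (fun τ => y τ ω) τ) ∂P := by
  by_cases hv : v = 0
  · have h0 : X =ᵐ[P] 0 := by
      have h1 := g_sq hX hXv
      rw [hv, NNReal.coe_zero, integral_eq_zero_iff_of_nonneg (fun _ => sq_nonneg _)
        (g_memLp hX hXv).integrable_sq] at h1
      filter_upwards [h1] with ω hω
      simpa using hω
    have h1 : ∀ τ, ∫ ω, X ω * y τ ω ∂P = 0 := fun τ => by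
      rw [integral_eq_zero_of_ae]
      filter_upwards [h0] with ω hω
      simp [hω]
    rw [integral_eq_zero_of_ae]
    · simp [h1]
    · filter_upwards [h0] with ω hω
      simp [hω]
  have hv' : (v : ℝ) ≠ 0 := by exact_mod_cast hv
  set c : S → ℝ := fun τ => ∫ ω, X ω * y τ ω ∂P with hcdef
  set a : S → ℝ := fun τ => c τ / v with hadef
  have ha : ∀ τ, |a τ| ≤ M / v := fun τ => by
    rw [hadef]; simp only [abs_div, NNReal.abs_eq]
    exact div_le_div_of_nonneg_right (hc τ) v.2
  have hMv : 0 ≤ M / v := div_nonneg hM v.2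
  set R : Ω → S → ℝ := fun ω τ => y τ ω - a τ * X ω with hR
  have hRm : Measurable R := measurable_pi_lambda _ fun τ => (hy τ).sub (hX.const_mul _)
  have hXL := g_memLp hX hXv
  have hind : IndepFun X R P := by
    have hG' : IsGaussianProcess (Sum.elim (fun _ : Unit => X) (fun τ ω => R ω τ)) P := by
      refine hG.of_isGaussianProcess ?_
      rintro (u | τ)
      · refine ⟨{i0}, .proj ⟨i0, by simp⟩, fun ω => ?_⟩
        simp [hi0]
      · refine ⟨{i0, j τ}, .proj ⟨j τ, by simp⟩ - a τ • .proj ⟨i0, by simp⟩, fun ω => ?_⟩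
        simp [hi0, hj, hR]
    have := hG'.indepFun_of_covariance_eq_zero (fun _ => hX.aemeasurable)
      (fun τ => ((hy τ).sub (hX.const_mul _)).aemeasurable) ?_
    · exact this.comp (φ := fun f : Unit → ℝ => f ()) (ψ := fun r => r) (by fun_prop) (by fun_prop)
    · intro _ τ
      have hRL : MemLp (fun ω => R ω τ) 2 P := (hyL τ).sub (hXL.const_mul _)
      rw [covariance_eq_sub hXL hRL, g_mean hX hXv, zero_mul, sub_zero]
      have e : (X * fun ω => R ω τ) = fun ω => X ω * y τ ω - a τ * (X ω ^ 2) := by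
        funext ω; simp [hR]; ring
      have ixy : Integrable (fun ω => X ω * y τ ω) P := hXL.integrable_mul (hyL τ)
      rw [e, integral_sub ixy (hXL.integrable_sq.const_mul _),
        integral_const_mul, g_sq hX hXv]
      simp only [hadef, hcdef]
      field_simp
      simp
  have hmap : P.map (fun ω => (X ω, R ω)) = (gaussianReal 0 v).prod (P.map R) := by
    rw [(indepFun_iff_map_prod_eq_prod_map_map hX.aemeasurable hRm.aemeasurable).1 hind, hXv]
  have : IsProbabilityMeasure (P.map R) := Measure.isProbabilityMeasure_map hRm.aemeasurable
  have hyR : ∀ ω, (fun τ => y τ ω) = fun τ => a τ * X ω + R ω τ := fun ω => by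
    funext τ; simp [hR]
  have hlm : Measurable fun p : ℝ × (S → ℝ) => fun τ => a τ * p.1 + p.2 τ :=
    measurable_pi_lambda _ fun τ => by fun_prop
  have hpm : Measurable fun p : ℝ × (S → ℝ) => ∏ i, gw w (fun τ => a τ * p.1 + p.2 τ) (σs i) := by
    refine Finset.measurable_prod _ fun i _ => ?_
    exact (measurable_gw w (σs i)).comp hlm
  have hp : ∀ p : ℝ × (S → ℝ), ‖∏ i, gw w (fun τ => a τ * p.1 + p.2 τ) (σs i)‖ ≤ 1 := by
    intro t
    rw [Real.norm_of_nonneg (Finset.prod_nonneg fun i _ => gw_nonneg hw _ _)]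
    exact Finset.prod_le_one (fun i _ => gw_nonneg hw _ _) fun i _ => gw_le_one hw _ _
  have hsm : Measurable fun p : ℝ × (S → ℝ) =>
      ∑ i, (c (σs i) - ∑' τ, c τ * gw w (fun τ => a τ * p.1 + p.2 τ) τ) := by
    refine Finset.measurable_sum _ fun i _ => measurable_const.sub (Measurable.tsum fun τ => ?_)
    exact ((measurable_gw w τ).comp hlm).const_mul _
  have hsb : ∀ p : ℝ × (S → ℝ),
      ‖∑ i, (c (σs i) - ∑' τ, c τ * gw w (fun τ => a τ * p.1 + p.2 τ) τ)‖ ≤ n * (M + M) := by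
    intro p
    refine (Finset.abs_sum_le_sum_abs _ _).trans ?_
    refine (Finset.sum_le_sum (g := fun _ => M + M) fun i _ => ?_).trans (by simp; linarith)
    exact (abs_sub _ _).trans (add_le_add (hc _) (cgw_abs_le hw _ _ hM hc))
  have i0 : Integrable (fun p : ℝ × (S → ℝ) => p.1) ((gaussianReal 0 v).prod (P.map R)) := by
    have : Integrable (fun t : ℝ => t) (gaussianReal 0 v) :=
      (memLp_id_gaussianReal (μ := 0) (v := v) 1).integrable (by simp)
    exact this.comp_fst _
  have i1 : Integrable (fun p : ℝ × (S → ℝ) => p.1 * ∏ i, gw w (fun τ => a τ * p.1 + p.2 τ) (σs i))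
      ((gaussianReal 0 v).prod (P.map R)) :=
    i0.mul_bdd hpm.aestronglyMeasurable (ae_of_all _ hp)
  have i2 : Integrable (fun p : ℝ × (S → ℝ) => (∏ i, gw w (fun τ => a τ * p.1 + p.2 τ) (σs i)) *
      ∑ i, (c (σs i) - ∑' τ, c τ * gw w (fun τ => a τ * p.1 + p.2 τ) τ))
      ((gaussianReal 0 v).prod (P.map R)) :=
    (Integrable.of_bound hpm.aestronglyMeasurable 1 (ae_of_all _ hp)).mul_bdd
      hsm.aestronglyMeasurable (ae_of_all _ hsb)
  have hXR : Measurable fun ω => (X ω, R ω) := hX.prodMk hRm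
  have l1 : ∫ ω, X ω * ∏ i, gw w (fun τ => y τ ω) (σs i) ∂P =
      ∫ r, ∫ t, t * ∏ i, gw w (fun τ => a τ * t + r τ) (σs i) ∂(gaussianReal 0 v) ∂(P.map R) := by
    rw [← integral_prod_symm _ i1, ← hmap, integral_map hXR.aemeasurable]
    · simp only [hyR]
    · exact (measurable_fst.mul hpm).aestronglyMeasurable
  have l2 : ∫ ω, (∏ i, gw w (fun τ => y τ ω) (σs i)) *
      ∑ i, (c (σs i) - ∑' τ, c τ * gw w (fun τ => y τ ω) τ) ∂P =
      ∫ r, ∫ t, (∏ i, gw w (fun τ => a τ * t + r τ) (σs i)) *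
      ∑ i, (c (σs i) - ∑' τ, c τ * gw w (fun τ => a τ * t + r τ) τ)
        ∂(gaussianReal 0 v) ∂(P.map R) := by
    rw [← integral_prod_symm _ i2, ← hmap, integral_map hXR.aemeasurable]
    · simp only [hyR]
    · exact (hpm.mul hsm).aestronglyMeasurable
  rw [l1, l2]
  congr 1
  funext r
  rw [core1d hw r a hMv ha hv σs, ← integral_const_mul]
  congr 1
  funext t
  rw [mul_left_comm, Finset.mul_sum]
  congr 1
  refine Finset.sum_congr rfl fun i _ => ?_
  rw [mul_sub, ← tsum_mul_left]
  have hca : ∀ τ, c τ = v * a τ := fun τ => by simp only [hadef]; field_simp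
  simp only [hca, mul_assoc]

end gauss

section final
variable {Ω S : Type}

lemma summable_pi {u : S → ℝ} (hu : ∀ σ, 0 ≤ u σ) (h : Summable u) (n : ℕ) :
    Summable fun σs : Fin n → S => ∏ i, u (σs i) := by
  induction n with
  | zero => exact Summable.of_finite
  | succ n ih =>
    rw [← (Fin.consEquiv fun _ => S).summable_iff]
    have := h.mul_of_nonneg ih hu (fun σs => Finset.prod_nonneg fun i _ => hu _)
    refine this.congr fun p => ?_
    simp [Fin.prod_univ_succ, Fin.consEquiv]

lemma tsum_snoc {n : ℕ} {F : (Fin (n + 1) → S) → ℝ} (hF : Summable F) :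
    ∑' σs, F σs = ∑' σs : Fin n → S, ∑' τ : S, F (Fin.snoc σs τ) := by
  let e : (Fin n → S) × S ≃ (Fin (n + 1) → S) :=
    (Equiv.prodComm _ _).trans (Fin.snocEquiv fun _ => S)
  have he : ∀ p, e p = Fin.snoc p.1 p.2 := fun p => rfl
  rw [← e.tsum_eq]
  have h2 : Summable fun p => F (e p) := e.summable_iff.2 hF
  exact h2.tsum_prod

lemma prod_le_sum_pow {n : ℕ} (hn : 1 ≤ n) (b : Fin n → ℝ) (hb : ∀ i, 0 ≤ b i) :
    ∏ i, b i ≤ ∑ i, b i ^ n := by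
  have : Nonempty (Fin n) := ⟨⟨0, hn⟩⟩
  obtain ⟨i, hi⟩ := Finite.exists_max b
  calc ∏ j, b j ≤ ∏ _j : Fin n, b i := Finset.prod_le_prod (fun j _ => hb j) fun j _ => hi j
    _ = b i ^ n := by simp
    _ ≤ _ := Finset.single_le_sum (f := fun i => b i ^ n) (fun j _ => pow_nonneg (hb j) _)
      (Finset.mem_univ i)

lemma gw_le {w : S → ℝ} (hw : ∀ σ, 0 ≤ w σ) (y : S → ℝ) (σ τ0 : S) (h0 : 0 < w τ0) :
    gw w y σ ≤ Real.exp (y σ - y τ0) * (w σ / w τ0) := by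
  by_cases hs : Summable fun τ => Real.exp (y τ) * w τ
  · have h1 : Real.exp (y τ0) * w τ0 ≤ ∑' τ, Real.exp (y τ) * w τ :=
      hs.le_tsum τ0 fun τ _ => mul_nonneg (exp_pos _).le (hw _)
    have h2 : Real.exp (y σ - y τ0) * (w σ / w τ0) =
        Real.exp (y σ) * w σ / (Real.exp (y τ0) * w τ0) := by
      rw [Real.exp_sub]; field_simp
    rw [h2, gw]
    exact div_le_div_of_nonneg_left (mul_nonneg (exp_pos _).le (hw _))
      (mul_pos (exp_pos _) h0) h1
  · simp only [gw, tsum_eq_zero_of_not_summable hs, div_zero]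
    exact mul_nonneg (exp_pos _).le (div_nonneg (hw _) h0.le)

lemma ptwise {n : ℕ} (hn : 1 ≤ n) {w : S → ℝ} (hw : ∀ σ, 0 ≤ w σ) (y : S → ℝ) (σs : Fin n → S)
    (τ0 : S) (h0 : 0 < w τ0) (X : ℝ) :
    (1 + |X|) * ∏ i, gw w y (σs i) ≤
      (2 + 2 * X ^ 2 + ∑ i, (Real.exp (4 * n * y (σs i)) + Real.exp (-(4 * n) * y τ0))) *
        ((∏ i, w (σs i)) / w τ0 ^ n) := by
  set E : ℝ := ∏ i, Real.exp (y (σs i) - y τ0) with hE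
  have h1 : ∏ i, gw w y (σs i) ≤ E * ((∏ i, w (σs i)) / w τ0 ^ n) := by
    calc ∏ i, gw w y (σs i) ≤ ∏ i, Real.exp (y (σs i) - y τ0) * (w (σs i) / w τ0) :=
          Finset.prod_le_prod (fun i _ => gw_nonneg hw _ _) fun i _ => gw_le hw y _ τ0 h0
      _ = _ := by simp [Finset.prod_mul_distrib, Finset.prod_div_distrib, hE]
  have hW : 0 ≤ (∏ i, w (σs i)) / w τ0 ^ n :=
    div_nonneg (Finset.prod_nonneg fun i _ => hw _) (pow_nonneg h0.le _)
  have h2 : E ^ 2 ≤ ∑ i, (Real.exp (4 * n * y (σs i)) + Real.exp (-(4 * n) * y τ0)) := by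
    rw [hE, ← Finset.prod_pow]
    refine (prod_le_sum_pow hn _ fun i => by positivity).trans (Finset.sum_le_sum fun i _ => ?_)
    have e1 : (Real.exp (y (σs i) - y τ0) ^ 2) ^ n
        = Real.exp (2 * n * y (σs i)) * Real.exp (-(2 * n) * y τ0) := by
      rw [← pow_mul, ← Real.exp_nat_mul, ← Real.exp_add]
      congr 1; push_cast; ring
    have e2 : Real.exp (4 * n * y (σs i)) = Real.exp (2 * n * y (σs i)) ^ 2 := by
      rw [← Real.exp_nat_mul]; congr 1; push_cast; ring
    have e3 : Real.exp (-(4 * n) * y τ0) = Real.exp (-(2 * n) * y τ0) ^ 2 := by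
      rw [← Real.exp_nat_mul]; congr 1; push_cast; ring
    rw [e1, e2, e3]
    nlinarith [sq_nonneg (Real.exp (2 * n * y (σs i)) - Real.exp (-(2 * n) * y τ0)),
      sq_nonneg (Real.exp (2 * n * y (σs i))), sq_nonneg (Real.exp (-(2 * n) * y τ0))]
  have h3 : (1 + |X|) * E ≤ 2 + 2 * X ^ 2 + E ^ 2 := by
    nlinarith [sq_nonneg (1 - |X|), sq_abs X, sq_nonneg (1 + |X| - E), sq_nonneg (1 + |X|),
      sq_nonneg E]
  calc (1 + |X|) * ∏ i, gw w y (σs i) ≤ (1 + |X|) * (E * ((∏ i, w (σs i)) / w τ0 ^ n)) :=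
        mul_le_mul_of_nonneg_left h1 (by positivity)
    _ = (1 + |X|) * E * ((∏ i, w (σs i)) / w τ0 ^ n) := by ring
    _ ≤ _ := mul_le_mul_of_nonneg_right (by linarith) hW

variable [MeasurableSpace Ω] {P : Measure Ω} [IsProbabilityMeasure P]

lemma int_bound [Countable S] {x y : S → Ω → ℝ} (hx : ∀ σ, Measurable (x σ))
    (hy : ∀ σ, Measurable (y σ))
    (hxl : ∀ σ, ∃ v : ℝ≥0, P.map (x σ) = gaussianReal 0 v)
    (hyl : ∀ σ, ∃ v : ℝ≥0, P.map (y σ) = gaussianReal 0 v)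
    {M : ℝ} (hM : ∀ σ : S, (∫ ω, (x σ ω) ^ 2 ∂P) ≤ M ∧ (∫ ω, (y σ ω) ^ 2 ∂P) ≤ M)
    {w : S → ℝ} (hw : ∀ σ, 0 ≤ w σ) {n : ℕ} (hn : 1 ≤ n) :
    ∃ K : ℝ, ∀ (σ : S) (σs : Fin n → S),
      Integrable (fun ω => (1 + |x σ ω|) * ∏ i, gw w (fun τ => y τ ω) (σs i)) P ∧
      ∫ ω, (1 + |x σ ω|) * ∏ i, gw w (fun τ => y τ ω) (σs i) ∂P ≤ K * ∏ i, w (σs i) := by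
  by_cases hw0 : ∃ τ, w τ ≠ 0
  swap
  · push Not at hw0
    refine ⟨0, fun σ σs => ?_⟩
    have : ∀ ω, (1 + |x σ ω|) * ∏ i, gw w (fun τ => y τ ω) (σs i) = 0 := fun ω => by
      rw [Finset.prod_eq_zero (Finset.mem_univ (⟨0, hn⟩ : Fin n)), mul_zero]
      simp [gw, hw0]
    simp [this]
  obtain ⟨τ0, hτ0⟩ := hw0
  have h0 : 0 < w τ0 := lt_of_le_of_ne (hw τ0) (Ne.symm hτ0)
  refine ⟨(2 + 2 * M + ∑ _i : Fin n, (Real.exp (M * (4 * n) ^ 2 / 2) +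
    Real.exp (M * (4 * n) ^ 2 / 2))) / w τ0 ^ n, fun σ σs => ?_⟩
  have hE : ∀ τ (t : ℝ), t ^ 2 = (4 * n) ^ 2 → Integrable (fun ω => Real.exp (t * y τ ω)) P ∧
      ∫ ω, Real.exp (t * y τ ω) ∂P ≤ Real.exp (M * (4 * n) ^ 2 / 2) := by
    intro τ t ht
    obtain ⟨v, hv⟩ := hyl τ
    refine ⟨g_exp_int (hy τ) hv t, ?_⟩
    rw [g_exp hv t, ht]
    have := (hM τ).2
    rw [g_sq (hy τ) hv] at this
    gcongr
  have ix : Integrable (fun ω => x σ ω ^ 2) P := by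
    obtain ⟨v, hv⟩ := hxl σ
    exact (g_memLp (hx σ) hv).integrable_sq
  have i1 : Integrable (fun ω => 2 + 2 * x σ ω ^ 2) P := (integrable_const 2).add (ix.const_mul 2)
  have i2 : ∀ i : Fin n, Integrable (fun ω => Real.exp (4 * n * y (σs i) ω) +
      Real.exp (-(4 * n) * y τ0 ω)) P := fun i =>
    (hE _ (4 * n) rfl).1.add (hE _ (-(4 * n)) (by ring)).1
  have i2' : Integrable (fun ω => ∑ i : Fin n, (Real.exp (4 * n * y (σs i) ω) +
      Real.exp (-(4 * n) * y τ0 ω))) P := integrable_finsetSum _ fun i _ => i2 i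
  have iB : Integrable (fun ω => (2 + 2 * x σ ω ^ 2 + ∑ i : Fin n, (Real.exp (4 * n * y (σs i) ω) +
      Real.exp (-(4 * n) * y τ0 ω))) * ((∏ i, w (σs i)) / w τ0 ^ n)) P := (i1.add i2').mul_const _
  have hpt := fun ω => ptwise hn hw (fun τ => y τ ω) σs τ0 h0 (x σ ω)
  have hnn : ∀ ω, 0 ≤ (1 + |x σ ω|) * ∏ i, gw w (fun τ => y τ ω) (σs i) := fun ω =>
    mul_nonneg (by positivity) (Finset.prod_nonneg fun i _ => gw_nonneg hw _ _)
  have hmy : Measurable fun ω => fun τ => y τ ω := measurable_pi_lambda _ hy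
  have hm : Measurable fun ω => (1 + |x σ ω|) * ∏ i, gw w (fun τ => y τ ω) (σs i) := by
    refine Measurable.mul ?_ (Finset.measurable_prod _ fun i _ => (measurable_gw w (σs i)).comp hmy)
    exact measurable_const.add (measurable_norm.comp (hx σ))
  have iL : Integrable (fun ω => (1 + |x σ ω|) * ∏ i, gw w (fun τ => y τ ω) (σs i)) P :=
    iB.mono' hm.aestronglyMeasurable (ae_of_all _ fun ω => by
      rw [Real.norm_of_nonneg (hnn ω)]; exact hpt ω)
  refine ⟨iL, (integral_mono iL iB hpt).trans ?_⟩
  rw [integral_mul_const, integral_add i1 i2', integral_add (integrable_const 2) (ix.const_mul 2),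
    integral_const_mul, integral_finsetSum _ fun i _ => i2 i]
  rw [div_mul_eq_mul_div, ← mul_div_assoc]
  refine div_le_div_of_nonneg_right ?_ (pow_nonneg h0.le _)
  refine mul_le_mul_of_nonneg_right ?_ (Finset.prod_nonneg fun i _ => hw _)
  refine add_le_add ?_ (Finset.sum_le_sum fun i _ => ?_)
  · have := (hM σ).1
    simp; linarith
  · rw [integral_add (hE _ (4 * n) rfl).1 (hE _ (-(4 * n)) (by ring)).1]
    exact add_le_add (hE _ (4 * n) rfl).2 (hE _ (-(4 * n)) (by ring)).2

end final

section main
variable {Ω S : Type} [MeasurableSpace Ω] {P : Measure Ω} [IsProbabilityMeasure P]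

lemma cov_bound {x y : Ω → ℝ} (hx : MemLp x 2 P) (hy : MemLp y 2 P) {M : ℝ}
    (h1 : ∫ ω, x ω ^ 2 ∂P ≤ M) (h2 : ∫ ω, y ω ^ 2 ∂P ≤ M) : |∫ ω, x ω * y ω ∂P| ≤ M := by
  have i : Integrable (fun ω => (x ω ^ 2 + y ω ^ 2) / 2) P :=
    (hx.integrable_sq.add hy.integrable_sq).div_const 2
  have : ‖∫ ω, x ω * y ω ∂P‖ ≤ ∫ ω, (x ω ^ 2 + y ω ^ 2) / 2 ∂P := by
    refine norm_integral_le_of_norm_le i (ae_of_all _ fun ω => ?_)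
    rw [Real.norm_eq_abs, abs_le]
    constructor <;> nlinarith [sq_nonneg (x ω + y ω), sq_nonneg (x ω - y ω)]
  rw [integral_div, integral_add hx.integrable_sq hy.integrable_sq] at this
  rw [Real.norm_eq_abs] at this
  linarith

lemma law_of {x y : S → Ω → ℝ}
    (hgauss : ∀ (s : Finset (S ⊕ S)) (c : S ⊕ S → ℝ), ∃ var : ℝ≥0,
      P.map (fun ω => ∑ i ∈ s, c i * Sum.elim x y i ω) = gaussianReal 0 var) (i : S ⊕ S) :
    ∃ v : ℝ≥0, P.map (Sum.elim x y i) = gaussianReal 0 v := by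
  obtain ⟨v, hv⟩ := hgauss {i} (fun _ => 1)
  exact ⟨v, by simpa using hv⟩

lemma main_aux [Countable S]
    (x y : S → Ω → ℝ) (hx : ∀ σ, Measurable (x σ)) (hy : ∀ σ, Measurable (y σ))
    (hgauss : ∀ (s : Finset (S ⊕ S)) (c : S ⊕ S → ℝ), ∃ var : ℝ≥0,
      P.map (fun ω => ∑ i ∈ s, c i * Sum.elim x y i ω) = gaussianReal 0 var)
    {M : ℝ} (hM : ∀ σ : S, (∫ ω, (x σ ω) ^ 2 ∂P) ≤ M ∧ (∫ ω, (y σ ω) ^ 2 ∂P) ≤ M)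
    {w : S → ℝ} (hw : ∀ σ, 0 ≤ w σ) (hsum : Summable w) (n : ℕ) (hn : 1 ≤ n)
    (f : (Fin n → S) → ℝ) {Kf : ℝ} (hf : ∀ σs, |f σs| ≤ Kf) :
    (∫ ω, (∑' σs : Fin n → S,
      f σs * x (σs ⟨0, hn⟩) ω * ∏ i, gibbsW y w (σs i) ω) ∂P) =
    ∫ ω, (∑' σs : Fin n → S, ∑' τ : S, f σs *
      ((∑ k : Fin n, cov P x y (σs ⟨0, hn⟩) (σs k)) - n * cov P x y (σs ⟨0, hn⟩) τ) *
        ((∏ i, gibbsW y w (σs i) ω) * gibbsW y w τ ω)) ∂P := by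
  have hxl : ∀ σ, ∃ v : ℝ≥0, P.map (x σ) = gaussianReal 0 v := fun σ => law_of hgauss (.inl σ)
  have hyl : ∀ σ, ∃ v : ℝ≥0, P.map (y σ) = gaussianReal 0 v := fun σ => law_of hgauss (.inr σ)
  have hxL : ∀ σ, MemLp (x σ) 2 P := fun σ => by
    obtain ⟨v, hv⟩ := hxl σ; exact g_memLp (hx σ) hv
  have hyL : ∀ σ, MemLp (y σ) 2 P := fun σ => by
    obtain ⟨v, hv⟩ := hyl σ; exact g_memLp (hy σ) hv
  have hc : ∀ σ τ, |cov P x y σ τ| ≤ M := fun σ τ => cov_bound (hxL σ) (hyL τ) (hM σ).1 (hM τ).2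
  have hG := gp_of hx hy hgauss
  obtain ⟨K, hK⟩ := int_bound hx hy hxl hyl hM hw hn
  have hg : ∀ σ ω, gibbsW y w σ ω = gw w (fun τ => y τ ω) σ := fun _ _ => rfl
  simp only [hg]
  rcases isEmpty_or_nonempty S with hS | ⟨⟨s0⟩⟩
  · have : IsEmpty (Fin n → S) := ⟨fun s => hS.elim (s ⟨0, hn⟩)⟩
    simp
  have hM0 : 0 ≤ M := (abs_nonneg _).trans (hc s0 s0)
  have hKf : 0 ≤ Kf := (abs_nonneg _).trans (hf fun _ => s0)
  have hmy : Measurable fun ω => fun τ => y τ ω := measurable_pi_lambda _ hy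
  have hpm : ∀ σs : Fin n → S, Measurable fun ω => ∏ i, gw w (fun τ => y τ ω) (σs i) := fun σs =>
    Finset.measurable_prod _ fun i _ => (measurable_gw w (σs i)).comp hmy
  have hp0 : ∀ (σs : Fin n → S) ω, 0 ≤ ∏ i, gw w (fun τ => y τ ω) (σs i) := fun σs ω =>
    Finset.prod_nonneg fun i _ => gw_nonneg hw _ _
  -- collapse the inner sum
  have hinner : ∀ (σs : Fin n → S) ω, ∑' τ : S, f σs *
      ((∑ k : Fin n, cov P x y (σs ⟨0, hn⟩) (σs k)) - n * cov P x y (σs ⟨0, hn⟩) τ) *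
        ((∏ i, gw w (fun τ => y τ ω) (σs i)) * gw w (fun τ => y τ ω) τ) =
      f σs * ((∏ i, gw w (fun τ => y τ ω) (σs i)) * ∑ i, (cov P x y (σs ⟨0, hn⟩) (σs i) -
        ∑' τ, cov P x y (σs ⟨0, hn⟩) τ * gw w (fun τ => y τ ω) τ)) := by
    intro σs ω
    set p := ∏ i, gw w (fun τ => y τ ω) (σs i) with hp
    set C := cov P x y (σs ⟨0, hn⟩) with hC
    have hs1 := gw_summable w (fun τ => y τ ω)
    have hs2 := cgw_summable hw (fun τ => y τ ω) C (hc _)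
    have hp1 : p * ∑' τ, gw w (fun τ => y τ ω) τ = p := by
      rw [hp, ← Finset.mul_prod_erase _ _ (Finset.mem_univ (⟨0, hn⟩ : Fin n)), mul_right_comm,
        gw_mul_tsum]
    have e : ∀ τ, f σs * ((∑ k : Fin n, C (σs k)) - n * C τ) * (p * gw w (fun τ => y τ ω) τ) =
        f σs * (∑ k : Fin n, C (σs k)) * p * gw w (fun τ => y τ ω) τ -
        f σs * n * p * (C τ * gw w (fun τ => y τ ω) τ) := fun τ => by ring
    rw [tsum_congr e, (hs1.mul_left _).tsum_sub (hs2.mul_left _), tsum_mul_left, tsum_mul_left,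
      mul_assoc _ p, hp1, Finset.sum_sub_distrib]
    simp
    ring
  simp only [hinner]
  set H : (Fin n → S) → Ω → ℝ := fun σs ω =>
    (∏ i, gw w (fun τ => y τ ω) (σs i)) * ∑ i, (cov P x y (σs ⟨0, hn⟩) (σs i) -
        ∑' τ, cov P x y (σs ⟨0, hn⟩) τ * gw w (fun τ => y τ ω) τ) with hH
  have hHm : ∀ σs, Measurable (H σs) := fun σs =>
    (hpm σs).mul (Finset.measurable_sum _ fun i _ => measurable_const.sub
      (Measurable.tsum fun τ => ((measurable_gw w τ).comp hmy).const_mul _))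
  have hHb : ∀ σs ω, |H σs ω| ≤
      n * (M + M) * ((1 + |x (σs ⟨0, hn⟩) ω|) * ∏ i, gw w (fun τ => y τ ω) (σs i)) := by
    intro σs ω
    simp only [hH]
    rw [abs_mul, abs_of_nonneg (hp0 σs ω), mul_comm]
    have h1 : |∑ i, (cov P x y (σs ⟨0, hn⟩) (σs i) -
        ∑' τ, cov P x y (σs ⟨0, hn⟩) τ * gw w (fun τ => y τ ω) τ)| ≤ n * (M + M) := by
      refine (Finset.abs_sum_le_sum_abs _ _).trans ?_
      refine (Finset.sum_le_sum (g := fun _ => M + M) fun i _ => ?_).trans (by simp; linarith)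
      exact (abs_sub _ _).trans (add_le_add (hc _ _) (cgw_abs_le hw _ _ hM0 (hc _)))
    refine mul_le_mul h1 ?_ (hp0 σs ω) (by positivity)
    exact le_mul_of_one_le_left (hp0 σs ω) (by linarith [abs_nonneg (x (σs ⟨0, hn⟩) ω)])
  -- general exchange
  have hex : ∀ (F : (Fin n → S) → Ω → ℝ) (D : ℝ), 0 ≤ D → (∀ σs, Measurable (F σs)) →
      (∀ σs ω, |F σs ω| ≤
        D * ((1 + |x (σs ⟨0, hn⟩) ω|) * ∏ i, gw w (fun τ => y τ ω) (σs i))) →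
      ∫ ω, ∑' σs, F σs ω ∂P = ∑' σs, ∫ ω, F σs ω ∂P := by
    intro F D hD hFm hFb
    have hi : ∀ σs, Integrable (F σs) P := fun σs =>
      ((hK (σs ⟨0, hn⟩) σs).1.const_mul D).mono' (hFm σs).aestronglyMeasurable
        (ae_of_all _ (hFb σs))
    refine (integral_tsum_of_summable_integral_norm hi ?_).symm
    refine Summable.of_nonneg_of_le (fun σs => integral_nonneg fun ω => norm_nonneg _)
      (fun σs => ?_) ((summable_pi hw hsum n).mul_left (D * K))
    refine (integral_mono (hi σs).norm ((hK (σs ⟨0, hn⟩) σs).1.const_mul D) (hFb σs)).trans ?_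
    rw [integral_const_mul, mul_assoc]
    exact mul_le_mul_of_nonneg_left (hK (σs ⟨0, hn⟩) σs).2 hD
  rw [hex (fun σs ω => f σs * x (σs ⟨0, hn⟩) ω * ∏ i, gw w (fun τ => y τ ω) (σs i)) Kf hKf (fun σs => ((hx _).const_mul _).mul (hpm σs)) ?_,
    hex (fun σs ω => f σs * H σs ω) (Kf * (n * (M + M))) (by positivity)
      (fun σs => (hHm σs).const_mul _) ?_]
  · refine tsum_congr fun σs => ?_
    simp only [mul_assoc]
    rw [integral_const_mul, integral_const_mul]
    congr 1
    obtain ⟨v, hv⟩ := hxl (σs ⟨0, hn⟩)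
    exact core2 (hx _) hy hG (.inl (σs ⟨0, hn⟩)) Sum.inr rfl (fun _ => rfl) hv hyL hM0 (hc _) hw σs
  · intro σs ω
    rw [abs_mul, mul_assoc Kf]
    exact mul_le_mul (hf σs) (hHb σs ω) (abs_nonneg _) hKf
  · intro σs ω
    rw [mul_assoc, abs_mul]
    refine mul_le_mul (hf σs) ?_ (abs_nonneg _) hKf
    rw [abs_mul, abs_of_nonneg (hp0 σs ω)]
    exact mul_le_mul_of_nonneg_right (by linarith) (hp0 σs ω)

end main

/-- **Gibbs–Gaussian integration by parts** (Lemma 3.2): for jointly Gaussian centered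
processes `x, y` on an at most countable set `S` with uniformly bounded variances, a finite
measure `w` on `S`, and the Gibbs measure `G(σ) = e^{y(σ)} w(σ)/Z`, one has
`E⟨x(σ)⟩_G = E⟨C(σ¹,σ¹) - C(σ¹,σ²)⟩_{G^{⊗2}}` and, for bounded measurable `f` on `Sⁿ`,
`E⟨f x(σ¹)⟩_{G^{⊗n}} = E⟨f (∑_{k=1}^n C(σ¹,σᵏ) - n C(σ¹,σ^{n+1}))⟩_{G^{⊗(n+1)}}`. -/
theorem gibbs_gaussian_integration_by_parts
    {Ω S : Type} [MeasurableSpace Ω] (P : Measure Ω) [IsProbabilityMeasure P]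
    [Countable S] [MeasurableSpace S]
    (x y : S → Ω → ℝ) (hx : ∀ σ, Measurable (x σ)) (hy : ∀ σ, Measurable (y σ))
    (hgauss : ∀ (s : Finset (S ⊕ S)) (c : S ⊕ S → ℝ), ∃ var : ℝ≥0,
      P.map (fun ω => ∑ i ∈ s, c i * Sum.elim x y i ω) = gaussianReal 0 var)
    (hvar : ∃ M : ℝ, ∀ σ : S,
      (∫ ω, (x σ ω) ^ 2 ∂P) ≤ M ∧ (∫ ω, (y σ ω) ^ 2 ∂P) ≤ M)
    (w : S → ℝ) (hw : ∀ σ, 0 ≤ w σ) (hsum : Summable w) :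
    ((∫ ω, (∑' σ : S, x σ ω * gibbsW y w σ ω) ∂P) =
        ∫ ω, (∑' σ₁ : S, ∑' σ₂ : S,
          (cov P x y σ₁ σ₁ - cov P x y σ₁ σ₂) *
            (gibbsW y w σ₁ ω * gibbsW y w σ₂ ω)) ∂P) ∧
      ∀ (n : ℕ) (hn : 1 ≤ n) (f : (Fin n → S) → ℝ),
        Measurable f → (∃ M, ∀ σs, |f σs| ≤ M) →
        (∫ ω, (∑' σs : Fin n → S,
            f σs * x (σs ⟨0, hn⟩) ω * ∏ i, gibbsW y w (σs i) ω) ∂P) =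
          ∫ ω, (∑' σs : Fin (n + 1) → S,
            f (fun i => σs i.castSucc) *
              ((∑ k : Fin n, cov P x y (σs (Fin.castSucc ⟨0, hn⟩)) (σs k.castSucc)) -
                n * cov P x y (σs (Fin.castSucc ⟨0, hn⟩)) (σs (Fin.last n))) *
              ∏ i, gibbsW y w (σs i) ω) ∂P := by
  obtain ⟨M, hM⟩ := hvar
  refine ⟨?_, ?_⟩
  · have h := main_aux x y hx hy hgauss hM hw hsum 1 le_rfl (fun _ => 1) (Kf := 1) (by simp)
    have h1 : ∀ F : (Fin 1 → S) → ℝ, ∑' σs, F σs = ∑' σ : S, F (fun _ => σ) := fun F =>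
      ((Equiv.funUnique (Fin 1) S).symm.tsum_eq F).symm
    simp only [h1] at h
    simpa using h
  · rintro n hn f - ⟨Kf, hf⟩
    rw [main_aux x y hx hy hgauss hM hw hsum n hn f hf]
    refine integral_congr_ae (ae_of_all _ fun ω => ?_)
    simp only
    have hxL : ∀ σ, MemLp (x σ) 2 P := fun σ => by
      obtain ⟨v, hv⟩ := law_of hgauss (.inl σ); exact g_memLp (hx σ) hv
    have hyL : ∀ σ, MemLp (y σ) 2 P := fun σ => by
      obtain ⟨v, hv⟩ := law_of hgauss (.inr σ); exact g_memLp (hy σ) hv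
    have hc : ∀ σ τ, |cov P x y σ τ| ≤ M := fun σ τ =>
      cov_bound (hxL σ) (hyL τ) (hM σ).1 (hM τ).2
    have hg : ∀ σ, gibbsW y w σ ω = gw w (fun τ => y τ ω) σ := fun _ => rfl
    rw [tsum_snoc]
    · simp only [Fin.prod_univ_castSucc, Fin.snoc_castSucc, Fin.snoc_last]
    · refine Summable.of_norm_bounded ((summable_pi (gw_nonneg hw (fun τ => y τ ω))
        (gw_summable w (fun τ => y τ ω)) (n + 1)).mul_left (Kf * (n * M + n * M))) fun σs => ?_
      simp only [hg]
      rw [norm_mul, Real.norm_of_nonneg (Finset.prod_nonneg fun i _ => gw_nonneg hw _ _)]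
      refine mul_le_mul_of_nonneg_right ?_ (Finset.prod_nonneg fun i _ => gw_nonneg hw _ _)
      rw [norm_mul]
      refine mul_le_mul (hf _) ?_ (norm_nonneg _) ((abs_nonneg _).trans (hf fun i => σs i.castSucc))
      refine (norm_sub_le _ _).trans (add_le_add ?_ ?_)
      · refine (norm_sum_le _ _).trans ((Finset.sum_le_sum fun k _ => hc _ _).trans (by simp))
      · rw [norm_mul, Real.norm_natCast]
        exact mul_le_mul_of_nonneg_left (hc _ _) (Nat.cast_nonneg n)
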